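/- arXiv:1307.6825 — 3 statements merged into one kernel-verified Lean document; each statement's English description precedes it below -/
import Mathlib

section
/- Let x : [0, T) → ℝ be a solution of the sliding ODE x'(t) = -(1 + 2x(t)²)/(2(1 - x(t)²)) with x(0) = x₀ ∈ (0, √2/2), defined as long as x(t) ∈ (0, √2/2). Then x is strictly decreasing, x'(t) ≤ -1/2 whenever x(t) ∈ (0, √2/2), and there exists t* ∈ (0, 2x₀] with x(t*) = 0; that is, the sliding motion starting at any point of the sliding region reaches the tangency point p = (0,0) in finite time. -/
/-!
On the sliding region the velocity is at most `-1/2`, so by the mean value theorem `x` decreases at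
rate at least `1/2` for as long as it stays in `(0, √2/2)`. Hence it cannot leave through the upper
end, and staying inside up to time `2 x₀` would force `x (2 x₀) ≤ 0`. So at some time in `(0, 2 x₀]`
it is nonpositive, and the intermediate value theorem gives a zero.
-/

open Set

theorem exists_first_exit {α β : Type*} [ConditionallyCompleteLinearOrder α] [TopologicalSpace α]
    [OrderTopology α] [TopologicalSpace β] {f : α → β} {a b : α} {U : Set β}
    (hf : ContinuousOn f (Icc a b)) (hU : IsOpen U) (ha : f a ∈ U)
    (hexit : ∃ t ∈ Icc a b, f t ∉ U) :
    ∃ m ∈ Ioc a b, f m ∉ U ∧ ∀ t ∈ Ico a m, f t ∈ U := by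
  have hclosed : IsClosed (Icc a b ∩ f ⁻¹' Uᶜ) :=
    hf.preimage_isClosed_of_isClosed isClosed_Icc hU.isClosed_compl
  obtain ⟨m, ⟨hm, hmU⟩, hmin⟩ :=
    (isCompact_Icc.of_isClosed_subset hclosed inter_subset_left).exists_isLeast hexit
  have ham : a ≠ m := fun h => hmU (h ▸ ha)
  refine ⟨m, ⟨hm.1.lt_of_ne ham, hm.2⟩, hmU, fun t ht => ?_⟩
  by_contra htU
  exact (hmin ⟨⟨ht.1, ht.2.le.trans hm.2⟩, htU⟩).not_gt ht.2

theorem sub_le_mul_sub_of_hasDerivAt_le {f f' : ℝ → ℝ} {s t C : ℝ} (hst : s ≤ t)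
    (hf : ContinuousOn f (Icc s t)) (hderiv : ∀ u ∈ Ioo s t, HasDerivAt f (f' u) u)
    (hle : ∀ u ∈ Ioo s t, f' u ≤ C) :
    f t - f s ≤ C * (t - s) := by
  rw [← interior_Icc] at hderiv hle
  exact (convex_Icc s t).image_sub_le_mul_sub_of_deriv_le hf
    (fun u hu => (hderiv u hu).differentiableAt.differentiableWithinAt)
    (fun u hu => (hderiv u hu).deriv.trans_le (hle u hu))
    s (left_mem_Icc.2 hst) t (right_mem_Icc.2 hst) hst

section HittingTime

variable {f f' : ℝ → ℝ} {a b c lo hi : ℝ}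

theorem exists_le_lower_of_hasDerivAt_le_neg (hc : 0 ≤ c) (hf : ContinuousOn f (Icc a b))
    (ha : f a ∈ Ioo lo hi) (hlong : f a - lo ≤ c * (b - a))
    (hderiv : ∀ t ∈ Ioo a b, f t ∈ Ioo lo hi → HasDerivAt f (f' t) t)
    (hle : ∀ t ∈ Ioo a b, f t ∈ Ioo lo hi → f' t ≤ -c) :
    ∃ m ∈ Ioc a b, f m ≤ lo := by
  have hab : a < b := sub_pos.1 (pos_of_mul_pos_right ((sub_pos.2 ha.1).trans_le hlong) hc)
  have drop : ∀ m ∈ Ioc a b, (∀ t ∈ Ioo a m, f t ∈ Ioo lo hi) → f m - f a ≤ -c * (m - a) := by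
    intro m hm hin
    have hsub : Ioo a m ⊆ Ioo a b := Ioo_subset_Ioo_right hm.2
    exact sub_le_mul_sub_of_hasDerivAt_le hm.1.le (hf.mono (Icc_subset_Icc_right hm.2))
      (fun t ht => hderiv t (hsub ht) (hin t ht)) (fun t ht => hle t (hsub ht) (hin t ht))
  by_cases hexit : ∃ t ∈ Icc a b, f t ∉ Ioo lo hi
  · obtain ⟨m, hm, hmout, hin⟩ := exists_first_exit hf isOpen_Ioo ha hexit
    have hdrop := drop m hm fun t ht => hin t (Ioo_subset_Ico_self ht)
    have hm_lt_hi : f m < hi := by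
      linarith [ha.2, mul_nonneg hc (sub_nonneg.2 hm.1.le)]
    exact ⟨m, hm, not_lt.1 fun hlo => hmout ⟨hlo, hm_lt_hi⟩⟩
  · push Not at hexit
    have hdrop := drop b (right_mem_Ioc.2 hab) fun t ht => hexit t (Ioo_subset_Icc_self ht)
    exact ⟨b, right_mem_Ioc.2 hab, by linarith⟩

theorem exists_eq_lower_of_hasDerivAt_le_neg (hc : 0 ≤ c) (hf : ContinuousOn f (Icc a b))
    (ha : f a ∈ Ioo lo hi) (hlong : f a - lo ≤ c * (b - a))
    (hderiv : ∀ t ∈ Ioo a b, f t ∈ Ioo lo hi → HasDerivAt f (f' t) t)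
    (hle : ∀ t ∈ Ioo a b, f t ∈ Ioo lo hi → f' t ≤ -c) :
    ∃ t ∈ Ioc a b, f t = lo := by
  obtain ⟨m, hm, hmlo⟩ := exists_le_lower_of_hasDerivAt_le_neg hc hf ha hlong hderiv hle
  obtain ⟨t, ht, htlo⟩ := intermediate_value_Ioc' hm.1.le
    (hf.mono (Icc_subset_Icc_right hm.2)) ⟨hmlo, ha.1⟩
  exact ⟨t, Ioc_subset_Ioc_right hm.2 ht, htlo⟩

end HittingTime

theorem sliding_velocity_le_neg_half {y : ℝ} (hy : y ^ 2 < 1) :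
    -(1 + 2 * y ^ 2) / (2 * (1 - y ^ 2)) ≤ -(1 / 2) := by
  rw [div_le_iff₀ (by linarith)]
  linarith [sq_nonneg y]

theorem sq_lt_one_of_mem_sliding_region {y : ℝ} (hy : y ∈ Ioo 0 (√2 / 2)) : y ^ 2 < 1 := by
  have hsqrt : √2 / 2 < 1 := by linarith [Real.sqrt_two_lt_three_halves]
  exact pow_lt_one₀ hy.1.le (hy.2.trans hsqrt) two_ne_zero

-- The requirement that the solution lives until it leaves `(0, √2/2)` is encoded by `2 * x₀ < T`,
-- with the ODE imposed only at times when `x` is in that interval.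
theorem sliding_motion_reaches_tangency_in_finite_time
    (T x₀ : ℝ) (x : ℝ → ℝ)
    (hx0 : x 0 = x₀) (hx0pos : 0 < x₀) (hx0lt : x₀ < Real.sqrt 2 / 2)
    (hT : 2 * x₀ < T)
    (hcont : ContinuousOn x (Set.Ico 0 T))
    (hode : ∀ t ∈ Set.Ico 0 T, 0 < x t → x t < Real.sqrt 2 / 2 →
      HasDerivAt x (-(1 + 2 * x t ^ 2) / (2 * (1 - x t ^ 2))) t) :
    (∀ s t : ℝ, 0 ≤ s → s < t → t < T →
      (∀ u : ℝ, s < u → u < t → 0 < x u ∧ x u < Real.sqrt 2 / 2) →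
      x t < x s) ∧
    (∀ t ∈ Set.Ico 0 T, 0 < x t → x t < Real.sqrt 2 / 2 →
      -(1 + 2 * x t ^ 2) / (2 * (1 - x t ^ 2)) ≤ -(1 / 2)) ∧
    (∃ tstar ∈ Set.Ioc 0 (2 * x₀), x tstar = 0) := by
  have velocity_le (t : ℝ) (ht : x t ∈ Ioo 0 (√2 / 2)) :
      -(1 + 2 * x t ^ 2) / (2 * (1 - x t ^ 2)) ≤ -(1 / 2) :=
    sliding_velocity_le_neg_half (sq_lt_one_of_mem_sliding_region ht)
  refine ⟨fun s t hs hst htT hin => ?_, fun t _ hpos hlt => velocity_le t ⟨hpos, hlt⟩, ?_⟩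
  · have hdrop : x t - x s ≤ -(1 / 2) * (t - s) :=
      sub_le_mul_sub_of_hasDerivAt_le hst.le (hcont.mono (Icc_subset_Ico hs htT))
        (fun u hu => hode u ⟨hs.trans hu.1.le, hu.2.trans htT⟩
          (hin u hu.1 hu.2).1 (hin u hu.1 hu.2).2)
        (fun u hu => velocity_le u (hin u hu.1 hu.2))
    linarith
  · subst hx0
    exact exists_eq_lower_of_hasDerivAt_le_neg one_half_pos.le
      (hcont.mono (Icc_subset_Ico_right hT)) ⟨hx0pos, hx0lt⟩ (by linarith)
      (fun t ht hin => hode t ⟨ht.1.le, ht.2.trans hT⟩ hin.1 hin.2)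
      (fun t _ hin => velocity_le t hin)
end

section
/- Let (x₀, y₀) ∈ ℝ² with -1 ≤ x₀ ≤ 1 and 0 ≤ y₀ ≤ 1 - x₀², and let γ(t) = (x₀ + t, x₀² + y₀ - (x₀ + t)²) be the X-solution through (x₀, y₀). Set t* = √(x₀² + y₀) - x₀ ≥ 0. Then γ(t*) = (√(x₀² + y₀), 0) with 0 ≤ √(x₀² + y₀) ≤ 1, the second coordinate of γ(t) is nonnegative for all t ∈ [0, t*], and γ(t) ∈ Λ = {(x,y) : -1 ≤ x ≤ 1, x⁴/2 - x²/2 ≤ y ≤ 1 - x²} for all t ∈ [0, t*]. That is, every forward X-trajectory starting in Λ ∩ {y ≥ 0} remains in Λ until it reaches the switching line Σ = {y = 0} in finite time, at a point with x-coordinate in [0, 1]. -/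
/-- The region Λ of the Example. -/
def Λreg : Set (ℝ × ℝ) :=
  {p : ℝ × ℝ | -1 ≤ p.1 ∧ p.1 ≤ 1 ∧
    p.1 ^ 4 / 2 - p.1 ^ 2 / 2 ≤ p.2 ∧ p.2 ≤ 1 - p.1 ^ 2}

/-- The X-solution through `(x₀, y₀)`. -/
def γX (x₀ y₀ t : ℝ) : ℝ × ℝ := (x₀ + t, x₀ ^ 2 + y₀ - (x₀ + t) ^ 2)

/-
`x ^ 2 + y` is a first integral of `X`, so the orbit through `(x₀, y₀)` runs along the parabola
`y = x₀ ^ 2 + y₀ - x ^ 2`, which lies below `y = 1 - x ^ 2` as soon as `(x₀, y₀)` does. Its arc in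
`y ≥ 0` spans `|x| ≤ √(x₀ ^ 2 + y₀)`, and in `y ≥ 0` the inequality `y ≤ 1 - x ^ 2` alone describes
`Λ`, because there it forces `x ^ 2 ≤ 1`, which makes the lower boundary `x ^ 4 / 2 - x ^ 2 / 2`
nonpositive.
-/

theorem mem_Λreg_of_snd_nonneg {p : ℝ × ℝ} (hp : 0 ≤ p.2) (hle : p.2 ≤ 1 - p.1 ^ 2) :
    p ∈ Λreg := by
  have fst_sq_le_one : p.1 ^ 2 ≤ 1 := by linarith
  obtain ⟨neg_one_le_fst, fst_le_one⟩ := abs_le.mp ((sq_le_one_iff_abs_le_one p.1).mp fst_sq_le_one)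
  have lower_boundary_le_snd : p.1 ^ 4 / 2 - p.1 ^ 2 / 2 ≤ p.2 :=
    calc p.1 ^ 4 / 2 - p.1 ^ 2 / 2 = -(p.1 ^ 2 * (1 - p.1 ^ 2) / 2) := by ring
      _ ≤ 0 := neg_nonpos.mpr (by have := sub_nonneg.mpr fst_sq_le_one; positivity)
      _ ≤ p.2 := hp
  exact ⟨neg_one_le_fst, fst_le_one, lower_boundary_le_snd, hle⟩

section Trajectory

variable {x₀ y₀ t : ℝ}

theorem γX_fst_sq_add_snd (x₀ y₀ t : ℝ) :
    (γX x₀ y₀ t).1 ^ 2 + (γX x₀ y₀ t).2 = x₀ ^ 2 + y₀ :=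
  add_sub_cancel _ _

theorem γX_sqrt_sub (h : 0 ≤ x₀ ^ 2 + y₀) :
    γX x₀ y₀ (√(x₀ ^ 2 + y₀) - x₀) = (√(x₀ ^ 2 + y₀), 0) := by
  simp only [γX, add_sub_cancel, Real.sq_sqrt h, sub_self]

theorem γX_snd_nonneg_iff (h : 0 ≤ x₀ ^ 2 + y₀) :
    0 ≤ (γX x₀ y₀ t).2 ↔
      t ∈ Set.Icc (-√(x₀ ^ 2 + y₀) - x₀) (√(x₀ ^ 2 + y₀) - x₀) := by
  rw [γX, sub_nonneg, Real.sq_le h, Set.mem_Icc, sub_le_iff_le_add', le_sub_iff_add_le']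

theorem γX_mem_Λreg (h : x₀ ^ 2 + y₀ ≤ 1) (ht : 0 ≤ (γX x₀ y₀ t).2) : γX x₀ y₀ t ∈ Λreg :=
  mem_Λreg_of_snd_nonneg ht (by linarith [γX_fst_sq_add_snd x₀ y₀ t])

end Trajectory

/- STATEMENT 16: for (x₀,y₀) with -1 ≤ x₀ ≤ 1 and 0 ≤ y₀ ≤ 1 - x₀², the
X-solution γ(t) = (x₀ + t, x₀² + y₀ - (x₀+t)²) through (x₀,y₀) satisfies, with
t* = √(x₀² + y₀) - x₀ ≥ 0: γ(t*) = (√(x₀² + y₀), 0) with 0 ≤ √(x₀² + y₀) ≤ 1,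
the second coordinate of γ is ≥ 0 on [0, t*], and γ(t) ∈ Λ for all t ∈ [0, t*].
Every forward X-trajectory starting in Λ ∩ {y ≥ 0} stays in Λ until it reaches
Σ = {y = 0} in finite time, at a point with x-coordinate in [0,1]. -/
theorem forward_X_trajectories_stay_in_Lambda
    (x₀ y₀ : ℝ) (hx₁ : -1 ≤ x₀) (hx₂ : x₀ ≤ 1)
    (hy₁ : 0 ≤ y₀) (hy₂ : y₀ ≤ 1 - x₀ ^ 2) :
    0 ≤ Real.sqrt (x₀ ^ 2 + y₀) - x₀ ∧
    γX x₀ y₀ (Real.sqrt (x₀ ^ 2 + y₀) - x₀) = (Real.sqrt (x₀ ^ 2 + y₀), 0) ∧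
    0 ≤ Real.sqrt (x₀ ^ 2 + y₀) ∧
    Real.sqrt (x₀ ^ 2 + y₀) ≤ 1 ∧
    (∀ t ∈ Set.Icc 0 (Real.sqrt (x₀ ^ 2 + y₀) - x₀), 0 ≤ (γX x₀ y₀ t).2) ∧
    (∀ t ∈ Set.Icc 0 (Real.sqrt (x₀ ^ 2 + y₀) - x₀), γX x₀ y₀ t ∈ Λreg) := by
  have sq_le : x₀ ^ 2 ≤ x₀ ^ 2 + y₀ := le_add_of_nonneg_right hy₁
  have nonneg : 0 ≤ x₀ ^ 2 + y₀ := (sq_nonneg x₀).trans sq_le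
  have le_one : x₀ ^ 2 + y₀ ≤ 1 := le_sub_iff_add_le'.mp hy₂
  obtain ⟨neg_sqrt_le, le_sqrt⟩ := (Real.sq_le nonneg).mp sq_le
  have snd_nonneg : ∀ t ∈ Set.Icc 0 (√(x₀ ^ 2 + y₀) - x₀), 0 ≤ (γX x₀ y₀ t).2 := fun t ht =>
    (γX_snd_nonneg_iff nonneg).mpr (Set.Icc_subset_Icc_left (sub_nonpos.mpr neg_sqrt_le) ht)
  exact ⟨sub_nonneg.mpr le_sqrt, γX_sqrt_sub nonneg, Real.sqrt_nonneg _,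
    Real.sqrt_le_one.mpr le_one, snd_nonneg, fun t ht => γX_mem_Λreg le_one (snd_nonneg t ht)⟩
end

section
/- Let g(x) = x⁴/2 - x²/2 and let (x₀, y₀) ∈ ℝ² with -1 ≤ x₀ ≤ 1 and g(x₀) ≤ y₀ ≤ 0, and let γ(t) = (x₀ - 2t, g(x₀ - 2t) + y₀ - g(x₀)) be the Y-solution through (x₀, y₀). Then there exists t* ∈ [0, (x₀ + 1)/2] such that the second coordinate of γ(t*) is 0 (so γ(t*) ∈ Σ and its x-coordinate x₀ - 2t* lies in [-1, x₀]); moreover, taking t* to be the first such time, γ(t) ∈ Λ = {(x,y) : -1 ≤ x ≤ 1, x⁴/2 - x²/2 ≤ y ≤ 1 - x²} for all t ∈ [0, t*]. That is, every forward Y-trajectory starting in Λ ∩ {y ≤ 0} remains in Λ until it reaches the switching line Σ = {y = 0} in finite time. -/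
/-- `g(x) = x⁴/2 - x²/2`. -/
noncomputable def gq (x : ℝ) : ℝ := x ^ 4 / 2 - x ^ 2 / 2

/-- The Y-solution through `(x₀, y₀)`. -/
noncomputable def γY (x₀ y₀ t : ℝ) : ℝ × ℝ :=
  (x₀ - 2 * t, gq (x₀ - 2 * t) + y₀ - gq x₀)

/-!
The function `y - g(x)` is a first integral of `Y`, so `g(x) ≤ y` persists along `γ`. In the lower
half-plane this inequality alone describes `Λ`: `g(x) ≤ 0` forces `|x| ≤ 1`, whence
`y ≤ 0 ≤ 1 - x²`. At time `(x₀ + 1) / 2` the solution is at `x = -1`, where `g` vanishes and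
therefore `y ≥ 0`; since `y₀ ≤ 0`, the intermediate value theorem provides a first time at which
`y = 0`, before which `y < 0`.
-/

open Set

theorem exists_eq_and_forall_Ico_lt_of_continuousOn_Icc
    {α δ : Type*} [ConditionallyCompleteLinearOrder α] [TopologicalSpace α] [OrderTopology α]
    [DenselyOrdered α] [LinearOrder δ] [TopologicalSpace δ] [OrderClosedTopology δ]
    {f : α → δ} {a b : α} {c : δ} (hab : a ≤ b) (hf : ContinuousOn f (Icc a b))
    (ha : f a ≤ c) (hb : c ≤ f b) :
    ∃ t ∈ Icc a b, f t = c ∧ ∀ s ∈ Ico a t, f s < c := by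
  have h_closed : IsClosed (Icc a b ∩ f ⁻¹' {c}) :=
    hf.preimage_isClosed_of_isClosed isClosed_Icc isClosed_singleton
  have h_nonempty : (Icc a b ∩ f ⁻¹' {c}).Nonempty := intermediate_value_Icc hab hf ⟨ha, hb⟩
  obtain ⟨t, ⟨ht, hft⟩, h_least⟩ :=
    (isCompact_Icc.of_isClosed_subset h_closed inter_subset_left).exists_isLeast h_nonempty
  refine ⟨t, ht, hft, fun s hs ↦ ?_⟩
  by_contra! hcs
  have hsb : s ≤ b := hs.2.le.trans ht.2
  obtain ⟨r, hr, hfr⟩ :=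
    intermediate_value_Icc hs.1 (hf.mono (Icc_subset_Icc_right hsb)) ⟨ha, hcs⟩
  have htr : t ≤ r := h_least ⟨⟨hr.1, hr.2.trans hsb⟩, hfr⟩
  exact (htr.trans hr.2).not_gt hs.2

theorem continuous_gq : Continuous gq := by
  unfold gq
  fun_prop

theorem gq_neg_one : gq (-1) = 0 := by
  norm_num [gq]

theorem sq_le_one_of_gq_nonpos {x : ℝ} (h : gq x ≤ 0) : x ^ 2 ≤ 1 := by
  have h_factor : gq x = x ^ 2 * (x ^ 2 - 1) / 2 := by
    unfold gq
    ring
  by_contra! hx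
  have h_pos : 0 < x ^ 2 * (x ^ 2 - 1) := mul_pos (by linarith) (by linarith)
  linarith

theorem mem_Λreg_of_gq_le_of_nonpos {p : ℝ × ℝ} (hg : gq p.1 ≤ p.2) (hp : p.2 ≤ 0) :
    p ∈ Λreg := by
  have h_sq : p.1 ^ 2 ≤ 1 := sq_le_one_of_gq_nonpos (hg.trans hp)
  obtain ⟨h_left, h_right⟩ := abs_le.mp ((sq_le_one_iff_abs_le_one p.1).mp h_sq)
  exact ⟨h_left, h_right, hg, hp.trans (sub_nonneg.mpr h_sq)⟩

section Trajectory

variable (x₀ y₀ : ℝ)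

theorem continuous_γY : Continuous (γY x₀ y₀) := by
  have := continuous_gq
  unfold γY
  fun_prop

theorem γY_zero : γY x₀ y₀ 0 = (x₀, y₀) := by
  simp [γY]

theorem snd_sub_gq_fst_γY (t : ℝ) :
    (γY x₀ y₀ t).2 - gq (γY x₀ y₀ t).1 = y₀ - gq x₀ := by
  simp only [γY]
  ring

theorem fst_γY_add_one_div_two : (γY x₀ y₀ ((x₀ + 1) / 2)).1 = -1 := by
  simp only [γY]
  ring

variable {x₀ y₀}

theorem gq_fst_γY_le_snd (h : gq x₀ ≤ y₀) (t : ℝ) : gq (γY x₀ y₀ t).1 ≤ (γY x₀ y₀ t).2 := by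
  rwa [← sub_nonneg, snd_sub_gq_fst_γY, sub_nonneg]

theorem snd_γY_add_one_div_two_nonneg (h : gq x₀ ≤ y₀) : 0 ≤ (γY x₀ y₀ ((x₀ + 1) / 2)).2 := by
  simpa only [fst_γY_add_one_div_two, gq_neg_one] using gq_fst_γY_le_snd h ((x₀ + 1) / 2)

theorem exists_first_snd_γY_eq_zero (hx : -1 ≤ x₀) (hg : gq x₀ ≤ y₀) (hy : y₀ ≤ 0) :
    ∃ t ∈ Icc 0 ((x₀ + 1) / 2), (γY x₀ y₀ t).2 = 0 ∧ ∀ s ∈ Ico 0 t, (γY x₀ y₀ s).2 < 0 :=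
  exists_eq_and_forall_Ico_lt_of_continuousOn_Icc (f := fun t ↦ (γY x₀ y₀ t).2)
    (by linarith) (continuous_γY x₀ y₀).snd.continuousOn
    (by simpa only [γY_zero] using hy) (snd_γY_add_one_div_two_nonneg hg)

end Trajectory

/- STATEMENT 17: for (x₀,y₀) with -1 ≤ x₀ ≤ 1 and g(x₀) ≤ y₀ ≤ 0, the
Y-solution γ(t) = (x₀ - 2t, g(x₀-2t) + y₀ - g(x₀)) through (x₀,y₀) reaches
Σ = {y = 0} at a first time t* ∈ [0, (x₀+1)/2] (so the x-coordinate x₀ - 2t*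
of γ(t*) lies in [-1, x₀]), and γ(t) ∈ Λ for all t ∈ [0, t*]: every forward
Y-trajectory starting in Λ ∩ {y ≤ 0} remains in Λ until it reaches the
switching line in finite time. -/
theorem forward_Y_trajectories_stay_in_Lambda
    (x₀ y₀ : ℝ) (hx₁ : -1 ≤ x₀) (hx₂ : x₀ ≤ 1)
    (hy₁ : gq x₀ ≤ y₀) (hy₂ : y₀ ≤ 0) :
    ∃ tstar ∈ Set.Icc 0 ((x₀ + 1) / 2),
      (γY x₀ y₀ tstar).2 = 0 ∧
      -1 ≤ x₀ - 2 * tstar ∧ x₀ - 2 * tstar ≤ x₀ ∧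
      (∀ s ∈ Set.Ico 0 tstar, (γY x₀ y₀ s).2 ≠ 0) ∧
      (∀ t ∈ Set.Icc 0 tstar, γY x₀ y₀ t ∈ Λreg) := by
  obtain ⟨T, hT, h_zero, h_neg⟩ := exists_first_snd_γY_eq_zero hx₁ hy₁ hy₂
  refine ⟨T, hT, h_zero, by linarith [hT.2], by linarith [hT.1], fun s hs ↦ (h_neg s hs).ne, ?_⟩
  intro t ht
  have h_nonpos : (γY x₀ y₀ t).2 ≤ 0 := by
    rcases ht.2.eq_or_lt with rfl | htT
    · exact h_zero.le
    · exact (h_neg t ⟨ht.1, htT⟩).le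
  exact mem_Λreg_of_gq_le_of_nonpos (gq_fst_γY_le_snd hy₁ t) h_nonpos
end
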